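/- Let A₁, A₂ be real 2×2 matrices and let P₀ = ℝ², P₁ = (A₁+iI)ℝ², P₂ = (A₂+iI)ℝ² be totally-real planes in ℂ² (i.e., Pⱼ ∩ iPⱼ = {0} for j = 0,1,2). Assume that each of the pairwise unions P₀ ∪ P₁, P₀ ∪ P₂, P₁ ∪ P₂ is locally polynomially convex at the origin, that det[A₁,A₂] > 0, that det Aⱼ < 0 for j = 1,2, and that β(A₁,A₂) > min{ det A₂ · (Tr A₁)², det A₁ · (Tr A₂)² }, where β(A₁,A₂) := 4 det(A₁A₂) − Tr(A₁A₂)·(Tr(A₁A₂) − Tr A₁ · Tr A₂) − (1/4)(Tr A₁ · Tr A₂)². Then P₀ ∪ P₁ ∪ P₂ is locally polynomially convex at the origin. -/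

import Mathlib

open Complex ComplexConjugate

/-- The polynomially convex hull of a set `K ⊆ ℂ²`. -/
def polyHull2 (K : Set (ℂ × ℂ)) : Set (ℂ × ℂ) :=
  { z | ∀ p : MvPolynomial (Fin 2) ℂ,
      ‖MvPolynomial.eval (fun i => if i = 0 then z.1 else z.2) p‖ ≤
        sSup ((fun w : ℂ × ℂ =>
          ‖MvPolynomial.eval (fun i => if i = 0 then w.1 else w.2) p‖) '' K) }

/-- A set `K ⊆ ℂ²` is polynomially convex if it equals its polynomially convex hull. -/
def PolyConvex2 (K : Set (ℂ × ℂ)) : Prop := polyHull2 K = K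

/-- The closed Euclidean ball of radius `r` centred at the origin in `ℂ²`. -/
def eClosedBall (r : ℝ) : Set (ℂ × ℂ) := { z | ‖z.1‖ ^ 2 + ‖z.2‖ ^ 2 ≤ r ^ 2 }

/-- A set is locally polynomially convex at the origin. -/
def LocPolyConvexAt0 (E : Set (ℂ × ℂ)) : Prop :=
  ∃ r > (0 : ℝ), PolyConvex2 (E ∩ eClosedBall r)

/-- The standard real plane `ℝ² = {(x,y) : x, y ∈ ℝ} ⊆ ℂ²`. -/
def plane0 : Set (ℂ × ℂ) := { zw | ∃ x y : ℝ, zw = ((x : ℂ), (y : ℂ)) }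

/-- The plane `(A + iI)ℝ² ⊆ ℂ²` for a real `2×2` matrix `A`. -/
def planeOf (A : Matrix (Fin 2) (Fin 2) ℝ) : Set (ℂ × ℂ) :=
  { zw | ∃ x y : ℝ,
      zw = (((A 0 0 * x + A 0 1 * y : ℝ) : ℂ) + Complex.I * (x : ℂ),
            ((A 1 0 * x + A 1 1 * y : ℝ) : ℂ) + Complex.I * (y : ℂ)) }

/-- A subset `S ⊆ ℂ²` is totally real if `S ∩ iS = {0}`. -/
def TotallyRealSet (S : Set (ℂ × ℂ)) : Prop :=
  S ∩ ((fun v => Complex.I • v) '' S) = {0}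

/-- The quantity `β(A₁,A₂)` from Theorem 3.3 of the paper. -/
noncomputable def betaQ (A₁ A₂ : Matrix (Fin 2) (Fin 2) ℝ) : ℝ :=
  4 * (A₁ * A₂).det - (A₁ * A₂).trace * ((A₁ * A₂).trace - A₁.trace * A₂.trace)
    - (1 / 4) * (A₁.trace * A₂.trace) ^ 2

section Aux

open MeasureTheory Filter Topology

lemma units_all {A : Type*} [NormedCommRing A] [NormedAlgebra ℂ A] [CompleteSpace A] (w : A) (C : ℝ)
    (hC : 0 < C) (h : ∀ t : ℝ, 0 ≤ t → ∀ x, (1 - (t:ℂ) • w) * x = 1 → ‖x‖ ≤ C) :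
    ∀ t : ℝ, 0 ≤ t → IsUnit (1 - (t:ℂ) • w) := by
  set d : ℝ := 1 / (2 * C * (‖w‖ + 1)) with hd
  have hw : 0 ≤ ‖w‖ := norm_nonneg w
  have hdpos : 0 < d := by positivity
  have hdC : d * (C * ‖w‖) < 1 := by
    rw [hd, div_mul_eq_mul_div, div_lt_one (by positivity)]
    nlinarith
  have step : ∀ n : ℕ, ∀ t : ℝ, 0 ≤ t → t ≤ n * d → IsUnit (1 - (t:ℂ) • w) := by
    intro n
    induction n with
    | zero =>
      intro t h0 h1
      have : t = 0 := by simp at h1; linarith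
      simp [this]
    | succ n ih =>
      intro t h0 h1
      by_cases hle : t ≤ d
      · have hu : IsUnit (1 - ((0:ℝ):ℂ) • w) := by simp
        have h1C : ‖(1:A)‖ ≤ C := h 0 le_rfl 1 (by simp)
        apply isUnit_one_sub_of_norm_lt_one
        have : (t:ℂ) • w = (t:ℂ) • (1 * w) := by simp
        rw [this, norm_smul]
        calc ‖(t:ℂ)‖ * ‖1 * w‖ ≤ d * (C * ‖w‖) := by
              rw [Complex.norm_of_nonneg h0]
              have := norm_mul_le (1:A) w
              gcongr
              exact this.trans (by gcongr)
          _ < 1 := hdC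
      · push Not at hle
        have hu := ih (t - d) (by linarith) (by push_cast at h1; linarith)
        obtain ⟨u, hu'⟩ := hu
        have hinv : (1 - ((t-d:ℝ):ℂ) • w) * (↑u⁻¹ : A) = 1 := by rw [← hu']; simp
        have hb := h (t-d) (by linarith) _ hinv
        have key : 1 - (t:ℂ) • w = u * (1 - (d:ℂ) • ((↑u⁻¹ : A) * w)) := by
          rw [mul_sub, mul_smul_comm, ← mul_assoc, Units.mul_inv, one_mul, mul_one, hu']
          push_cast
          rw [sub_smul]; abel
        rw [key]
        refine u.isUnit.mul (isUnit_one_sub_of_norm_lt_one ?_)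
        rw [norm_smul, Complex.norm_of_nonneg hdpos.le]
        refine lt_of_le_of_lt ?_ hdC
        gcongr
        exact (norm_mul_le _ _).trans (by gcongr)
  intro t ht
  obtain ⟨n, hn⟩ := exists_nat_ge (t / d)
  exact step n t ht ((div_le_iff₀ hdpos).1 hn)

lemma slit_aux {v : ℂ} {κ : ℝ} (hκ : κ < 1) (hv : v ≠ 0) (h : v.re ≤ κ * ‖v‖) :
    -v ∈ Complex.slitPlane := by
  rw [Complex.mem_slitPlane_iff]
  by_contra hcon
  push Not at hcon
  obtain ⟨h1, h2⟩ := hcon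
  simp only [Complex.neg_re, Complex.neg_im, neg_eq_zero] at h1 h2
  have hn : ‖v‖ = v.re := by
    have : v = (v.re : ℂ) := Complex.ext rfl (by simp [h2])
    rw [this, Complex.norm_of_nonneg (by linarith)]; simp
  have hp : 0 < ‖v‖ := norm_pos_iff.2 hv
  nlinarith

lemma slit_aux2 {u : ℂ} (hu : -u ∈ Complex.slitPlane) {t : ℝ} (ht : 0 ≤ t) :
    1 - (t:ℂ) * u ∈ Complex.slitPlane := by
  rw [Complex.mem_slitPlane_iff] at hu ⊢
  simp at hu ⊢
  rcases ht.eq_or_lt with rfl | ht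
  · left; simp
  · rcases hu with hu | hu
    · left; nlinarith
    · right; exact ⟨ht.ne', hu⟩

lemma tendsto_log_aux {u v : ℂ} (hu : -u ∈ Complex.slitPlane) (hv : -v ∈ Complex.slitPlane) :
    Tendsto (fun t : ℝ => Complex.log (1 - (t:ℂ) * u) - Complex.log (1 - (t:ℂ) * v)) atTop
      (𝓝 (Complex.log (-u) - Complex.log (-v))) := by
  have key : ∀ u : ℂ, -u ∈ Complex.slitPlane →
      Tendsto (fun t : ℝ => Complex.log (((t⁻¹ : ℝ) : ℂ) - u)) atTop (𝓝 (Complex.log (-u))) := by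
    intro u hu
    have h1 : Tendsto (fun t : ℝ => ((t⁻¹ : ℝ) : ℂ) - u) atTop (𝓝 (((0:ℝ):ℂ) - u)) :=
      ((Complex.continuous_ofReal.tendsto 0).comp tendsto_inv_atTop_zero).sub_const u
    simp only [Complex.ofReal_zero, zero_sub] at h1
    exact h1.clog hu
  refine ((key u hu).sub (key v hv)).congr' ?_
  filter_upwards [eventually_gt_atTop 0] with t ht
  have h2 : ∀ u : ℂ, -u ∈ Complex.slitPlane → Complex.log (1 - (t:ℂ) * u)
      = (Real.log t : ℂ) + Complex.log (((t⁻¹ : ℝ) : ℂ) - u) := by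
    intro u hu
    have ht' : (t:ℂ) ≠ 0 := by exact_mod_cast ht.ne'
    have h3 : 1 - (t:ℂ) * u = (t:ℂ) * (((t⁻¹ : ℝ) : ℂ) - u) := by
      push_cast; field_simp
    have h4 : (((t⁻¹ : ℝ) : ℂ) - u) ≠ 0 := by
      intro h0
      have := Complex.slitPlane_ne_zero (slit_aux2 hu ht.le)
      rw [h3, h0] at this; simp at this
    rw [h3, Complex.log_ofReal_mul ht h4]
  rw [h2 u hu, h2 v hv]; ring

lemma int_eval (a b w : ℂ) (ha : -(a*w) ∈ Complex.slitPlane) (hb : -(b*w) ∈ Complex.slitPlane)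
    (hint : IntegrableOn (fun t : ℝ => w*(b-a)*((1-t*(a*w))⁻¹*(1-t*(b*w))⁻¹)) (Set.Ioi 0)) :
    ∫ t : ℝ in Set.Ioi 0, w*(b-a)*((1-t*(a*w))⁻¹*(1-t*(b*w))⁻¹)
      = Complex.log (-(a*w)) - Complex.log (-(b*w)) := by
  have hd : ∀ t : ℝ, 0 ≤ t → HasDerivAt
      (fun t : ℝ => Complex.log (1 - (t:ℂ) * (a*w)) - Complex.log (1 - (t:ℂ) * (b*w)))
      (w*(b-a)*((1-t*(a*w))⁻¹*(1-t*(b*w))⁻¹)) t := by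
    intro t ht
    have h1 : ∀ u : ℂ, HasDerivAt (fun t : ℝ => 1 - (t:ℂ) * u) (-u) t := by
      intro u
      have := ((Complex.ofRealCLM.hasDerivAt (x := t)).mul_const u).const_sub 1
      simpa using this
    have h2 := ((h1 (a*w)).clog_real (slit_aux2 ha ht)).sub ((h1 (b*w)).clog_real (slit_aux2 hb ht))
    have e1 := Complex.slitPlane_ne_zero (slit_aux2 ha ht)
    have e2 := Complex.slitPlane_ne_zero (slit_aux2 hb ht)
    refine h2.congr_deriv ?_
    rw [div_sub_div _ _ e1 e2, ← mul_inv, div_eq_mul_inv]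
    ring
  have := integral_Ioi_of_hasDerivAt_of_tendsto
    (hd 0 le_rfl).continuousAt.continuousWithinAt (fun t ht => hd t (le_of_lt ht)) hint
    (tendsto_log_aux ha hb)
  rw [this]; simp

lemma log_val_pos {w : ℂ} {ε γ : ℝ} (hw : w ≠ 0) (hγ0 : 0 < γ) (hγ : γ < Real.pi / 2)
    (hc : Real.cos γ < ε) (h : ε * ‖w‖ ≤ w.re) :
    Complex.log (-(Complex.exp (-(γ:ℂ) * Complex.I) * w))
      - Complex.log (-(Complex.exp ((γ:ℂ) * Complex.I) * w))
      = 2 * Real.pi * Complex.I - 2 * γ * Complex.I := by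
  have hn : 0 < ‖w‖ := norm_pos_iff.2 hw
  have hφ : |w.arg| < γ := by
    by_contra hcon
    push Not at hcon
    have h1 := Real.cos_le_cos_of_nonneg_of_le_pi hγ0.le (Complex.abs_arg_le_pi w) hcon
    rw [Real.cos_abs, Complex.cos_arg hw, div_le_iff₀ hn] at h1
    nlinarith
  rw [abs_lt] at hφ
  have hpi := Real.pi_pos
  have e1 : -(Complex.exp (-(γ:ℂ) * Complex.I) * w)
      = Complex.exp (-(γ:ℂ) * Complex.I + Complex.log w + Real.pi * Complex.I) := by
    rw [Complex.exp_add, Complex.exp_add, Complex.exp_log hw, Complex.exp_pi_mul_I]; ring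
  have e2 : -(Complex.exp ((γ:ℂ) * Complex.I) * w)
      = Complex.exp ((γ:ℂ) * Complex.I + Complex.log w - Real.pi * Complex.I) := by
    rw [Complex.exp_sub, Complex.exp_add, Complex.exp_log hw, Complex.exp_pi_mul_I]; ring
  rw [e1, e2, Complex.log_exp, Complex.log_exp]
  · ring
  all_goals simp [Complex.log_im]; try linarith

lemma log_val_neg {w : ℂ} {γ : ℝ} (hw : w ≠ 0) (hγ0 : 0 < γ) (hγ : γ < Real.pi / 2)
    (h : w.re ≤ 0) :
    Complex.log (-(Complex.exp (-(γ:ℂ) * Complex.I) * w))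
      - Complex.log (-(Complex.exp ((γ:ℂ) * Complex.I) * w))
      = - 2 * γ * Complex.I := by
  have hw' : -w ≠ 0 := neg_ne_zero.2 hw
  have hφ : |(-w).arg| ≤ Real.pi / 2 := by
    rw [Complex.abs_arg_le_pi_div_two_iff]; simpa using h
  rw [abs_le] at hφ
  have hpi := Real.pi_pos
  have e1 : -(Complex.exp (-(γ:ℂ) * Complex.I) * w)
      = Complex.exp (-(γ:ℂ) * Complex.I + Complex.log (-w)) := by
    rw [Complex.exp_add, Complex.exp_log hw']; ring
  have e2 : -(Complex.exp ((γ:ℂ) * Complex.I) * w)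
      = Complex.exp ((γ:ℂ) * Complex.I + Complex.log (-w)) := by
    rw [Complex.exp_add, Complex.exp_log hw']; ring
  rw [e1, e2, Complex.log_exp, Complex.log_exp]
  · ring
  all_goals simp [Complex.log_im]; try linarith

lemma re_bound {w : ℂ} {ε : ℝ} (hε : 0 < ε) (h : ε * ‖w‖ ≤ w.re ∨ w.re ≤ 0) {c : ℂ}
    (hc : ‖c‖ = 1) (hcr : c.re = ε / 2) : (c * w).re ≤ (1 - ε^2/8) * ‖w‖ := by
  have hn := norm_nonneg w
  have h1 : c.re^2 + c.im^2 = 1 := by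
    have := Complex.sq_norm c; rw [hc, Complex.normSq_apply] at this; nlinarith
  have h2 : ‖w‖^2 = w.re^2 + w.im^2 := by
    have := Complex.sq_norm w; rw [Complex.normSq_apply] at this; nlinarith
  rw [Complex.mul_re]
  have h3 : (ε/2 * ‖w‖)^2 ≤ (w.re - c.re * ‖w‖)^2 := by
    rw [hcr]
    rcases h with h | h
    · apply sq_le_sq' <;> nlinarith
    · rw [← neg_sq (w.re - _)]
      apply sq_le_sq' <;> nlinarith
  have h4 : 2 * ‖w‖ * (‖w‖ - (c.re * w.re - c.im * w.im)) = (w.re - c.re * ‖w‖)^2 + (w.im + c.im*‖w‖)^2 := by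
    linear_combination h2 - ‖w‖^2 * h1
  by_cases h0 : ‖w‖ = 0
  · have : w = 0 := norm_eq_zero.1 h0
    simp [this]
  · have hp : 0 < ‖w‖ := lt_of_le_of_ne hn (Ne.symm h0)
    have h5 : ‖w‖ * (ε^2/8*‖w‖) ≤ ‖w‖ * (‖w‖ - (c.re * w.re - c.im * w.im)) := by
      nlinarith [sq_nonneg (w.im + c.im*‖w‖)]
    have := le_of_mul_le_mul_left h5 hp
    linarith

lemma norm_bound {v : ℂ} {κ : ℝ} (hκ : 0 ≤ κ) (h : v.re ≤ κ * ‖v‖) :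
    (1 - κ) * (1 + ‖v‖^2) ≤ ‖1 - v‖^2 := by
  have h2 : ‖v‖^2 = v.re^2 + v.im^2 := by
    have := Complex.sq_norm v; rw [Complex.normSq_apply] at this; nlinarith
  have h3 : ‖1 - v‖^2 = (1-v.re)^2 + v.im^2 := by
    have := Complex.sq_norm (1-v); rw [Complex.normSq_apply] at this
    simp at this; nlinarith
  rw [h3]
  nlinarith [sq_nonneg (‖v‖ - 1)]

lemma step_elem {A X : Type*} [NormedCommRing A] [NormedAlgebra ℂ A] [CompleteSpace A]
    (ev : X → (A →ₐ[ℂ] ℂ))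
    (hev : ∀ x a, ‖ev x a‖ ≤ ‖a‖)
    (hnorm : ∀ (a : A) (M : ℝ), 0 ≤ M → (∀ x, ‖ev x a‖ ≤ M) → ‖a‖ ≤ M)
    (w : A) (ε : ℝ) (hε : 0 < ε) (hε1 : ε ≤ 1)
    (hw : ∀ x, ε * ‖ev x w‖ ≤ (ev x w).re ∨ (ev x w).re ≤ 0) :
    ∃ e : A, ∀ x, (0 < (ev x w).re → ev x e = ev x w) ∧ ((ev x w).re ≤ 0 → ev x e = 0) := by
  set γ := Real.arccos (ε/2) with hγ
  have hcos : Real.cos γ = ε/2 := Real.cos_arccos (by linarith) (by linarith)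
  have hγ2 : γ < Real.pi / 2 := Real.arccos_lt_pi_div_two.2 (by linarith)
  have hγ0 : 0 < γ := Real.arccos_pos.2 (by linarith)
  set a : ℂ := Complex.exp (-(γ:ℂ) * Complex.I) with ha
  set b : ℂ := Complex.exp ((γ:ℂ) * Complex.I) with hb
  have han : ‖a‖ = 1 := by
    have := Complex.norm_exp_ofReal_mul_I (-γ); push_cast at this; exact this
  have hbn : ‖b‖ = 1 := Complex.norm_exp_ofReal_mul_I γ
  have har : a.re = ε/2 := by
    have := Complex.exp_ofReal_mul_I_re (-γ); push_cast at this; rw [ha, this, Real.cos_neg, hcos]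
  have hbr : b.re = ε/2 := by rw [hb, Complex.exp_ofReal_mul_I_re, hcos]
  set κ : ℝ := 1 - ε^2/8 with hκ
  have hκ0 : 0 ≤ κ := by nlinarith
  have hκ1 : κ < 1 := by nlinarith
  set c : ℝ := Real.sqrt (1 - κ) with hcdef
  have hc2 : c^2 = 1 - κ := Real.sq_sqrt (by linarith)
  have hc : 0 < c := Real.sqrt_pos.2 (by linarith)
  -- pointwise bound
  have hpt : ∀ d : ℂ, ‖d‖ = 1 → d.re = ε/2 → ∀ x (t : ℝ), 0 ≤ t →
      c^2 * (1 + t^2 * ‖ev x w‖^2) ≤ ‖1 - (t:ℂ) * (d * ev x w)‖^2 := by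
    intro d hd hdr x t ht
    have h1 := re_bound hε (hw x) hd hdr
    have h2 : ((t:ℂ) * (d * ev x w)).re ≤ κ * ‖(t:ℂ) * (d * ev x w)‖ := by
      rw [Complex.re_ofReal_mul, norm_mul, norm_mul, hd, one_mul, Complex.norm_of_nonneg ht]
      calc t * (d * ev x w).re ≤ t * (κ * ‖ev x w‖) := by gcongr
        _ = κ * (t * ‖ev x w‖) := by ring
    have h3 := norm_bound hκ0 h2
    rw [norm_mul, norm_mul, hd, one_mul, Complex.norm_of_nonneg ht, mul_pow] at h3
    rw [hc2]; simpa [norm_mul, hd] using h3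
  have hpt1 : ∀ d : ℂ, ‖d‖ = 1 → d.re = ε/2 → ∀ x (t : ℝ), 0 ≤ t →
      c ≤ ‖1 - (t:ℂ) * (d * ev x w)‖ := by
    intro d hd hdr x t ht
    have := hpt d hd hdr x t ht
    refine le_of_sq_le_sq ?_ (norm_nonneg _)
    nlinarith [mul_nonneg (sq_nonneg c) (mul_nonneg (sq_nonneg t) (sq_nonneg ‖ev x w‖))]
  have hunit : ∀ d : ℂ, ‖d‖ = 1 → d.re = ε/2 → ∀ t : ℝ, 0 ≤ t →
      IsUnit (1 - (t:ℂ) • (d • w)) := by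
    intro d hd hdr
    refine units_all (d • w) c⁻¹ (inv_pos.2 hc) ?_
    intro t ht y hy
    refine hnorm _ _ (inv_pos.2 hc).le ?_
    intro x
    have h1 := congrArg (ev x) hy
    rw [map_mul, map_sub, map_one, map_smul, map_smul, smul_eq_mul, smul_eq_mul] at h1
    have h2 := hpt1 d hd hdr x t ht
    have h3 := congrArg norm h1
    rw [norm_mul, norm_one] at h3
    rw [← one_div, le_div_iff₀ hc]
    nlinarith [norm_nonneg (ev x y)]
  set R : ℂ → ℝ → A := fun d t => Ring.inverse (1 - (t:ℂ) • (d • w)) with hR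
  have hRev : ∀ d : ℂ, ‖d‖ = 1 → d.re = ε/2 → ∀ x (t : ℝ), 0 ≤ t →
      ev x (R d t) = (1 - (t:ℂ) * (d * ev x w))⁻¹ := by
    intro d hd hdr x t ht
    have h1 := congrArg (ev x) (Ring.mul_inverse_cancel _ (hunit d hd hdr t ht))
    rw [map_mul, map_sub, map_one, map_smul, map_smul, smul_eq_mul, smul_eq_mul] at h1
    exact eq_inv_of_mul_eq_one_right h1
  have hRc : ∀ d : ℂ, ‖d‖ = 1 → d.re = ε/2 → ContinuousOn (R d) (Set.Ioi 0) := by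
    intro d hd hdr t ht
    obtain ⟨u, hu⟩ := hunit d hd hdr t (le_of_lt ht)
    have h1 := NormedRing.inverse_continuousAt u
    rw [hu] at h1
    have h2 : ContinuousAt (fun t : ℝ => (1 : A) - (t:ℂ) • (d • w)) t := by fun_prop
    exact (ContinuousAt.comp (f := fun t : ℝ => (1 : A) - (t:ℂ) • (d • w)) h1 h2).continuousWithinAt
  set G : ℝ → A := fun t => (b - a) • (w ^ 2 * (R a t * R b t)) with hG
  have hGev : ∀ x (t : ℝ), 0 ≤ t → ev x (G t) = ev x w *
      (ev x w * (b-a) * ((1 - (t:ℂ) * (a * ev x w))⁻¹ * (1 - (t:ℂ) * (b * ev x w))⁻¹)) := by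
    intro x t ht
    simp only [hG, map_smul, map_mul, map_pow, smul_eq_mul, hRev a han har x t ht, hRev b hbn hbr x t ht]
    ring
  have hGn : ∀ t : ℝ, 0 ≤ t → ‖G t‖ ≤ (2 / c^2 * (‖w‖+1)^2) * (1 + t^2)⁻¹ := by
    intro t ht
    refine hnorm _ _ (by positivity) ?_
    intro x
    rw [hGev x t ht, norm_mul, norm_mul, norm_mul, norm_mul, norm_inv, norm_inv]
    set N := ‖ev x w‖ with hN
    have hN0 : 0 ≤ N := norm_nonneg _
    have hNw : N ≤ ‖w‖ + 1 := (hev x w).trans (by linarith)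
    have q1 := hpt a han har x t ht
    have q2 := hpt b hbn hbr x t ht
    have q1' := hpt1 a han har x t ht
    have q2' := hpt1 b hbn hbr x t ht
    set U := ‖1 - (t:ℂ) * (a * ev x w)‖ with hU
    set V := ‖1 - (t:ℂ) * (b * ev x w)‖ with hV
    have hU0 : 0 < U := hc.trans_le q1'
    have hV0 : 0 < V := hc.trans_le q2'
    have hab : ‖b - a‖ ≤ 2 := (norm_sub_le _ _).trans (by rw [han, hbn]; norm_num)
    have hUV : c^2 * (1 + t^2*N^2) ≤ U * V := by
      refine le_of_sq_le_sq ?_ (by positivity)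
      rw [sq, mul_pow]
      exact mul_le_mul q1 q2 (by positivity) (by positivity)
    have hM : N^2 * (1+t^2) ≤ (‖w‖+1)^2 * (1 + t^2*N^2) := by
      have hw0 := norm_nonneg w
      have h1 : N^2 ≤ (‖w‖+1)^2 := by gcongr
      have h2 : (1:ℝ) ≤ (‖w‖+1)^2 := by nlinarith
      nlinarith [mul_nonneg (sq_nonneg t) (sq_nonneg N)]
    have e : N * (N * ‖b - a‖ * (U⁻¹ * V⁻¹)) = (N^2 * ‖b-a‖) / (U*V) := by
      field_simp
    have e' : (2 / c^2 * (‖w‖+1)^2) * (1 + t^2)⁻¹ = (2 * (‖w‖+1)^2) / (c^2*(1+t^2)) := by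
      field_simp
    rw [e, e', div_le_div_iff₀ (by positivity) (by positivity)]
    calc N^2 * ‖b-a‖ * (c^2*(1+t^2)) = ‖b-a‖ * c^2 * (N^2*(1+t^2)) := by ring
      _ ≤ 2 * c^2 * ((‖w‖+1)^2 * (1 + t^2*N^2)) := by gcongr
      _ = 2 * (‖w‖+1)^2 * (c^2 * (1 + t^2*N^2)) := by ring
      _ ≤ 2 * (‖w‖+1)^2 * (U*V) := by gcongr
  have hGi : IntegrableOn G (Set.Ioi 0) := by
    have hm : AEStronglyMeasurable G (volume.restrict (Set.Ioi 0)) := by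
      refine ContinuousOn.aestronglyMeasurable ?_ measurableSet_Ioi
      exact ((continuousOn_const.mul ((hRc a han har).mul (hRc b hbn hbr))).const_smul (b-a))
    refine Integrable.mono' ((integrable_inv_one_add_sq.const_mul
      (2 / c^2 * (‖w‖+1)^2)).integrableOn) hm ?_
    · rw [ae_restrict_iff' measurableSet_Ioi]
      exact Eventually.of_forall (fun t ht => hGn t (le_of_lt ht))
  set E : A := ∫ t in Set.Ioi 0, G t with hE
  have hEev : ∀ x, ev x E = ∫ t in Set.Ioi 0, ev x (G t) := by
    intro x
    exact ((ev x).toContinuousLinearMap.integral_comp_comm hGi).symm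
  have hEval : ∀ x, ev x w ≠ 0 → ev x E = ev x w *
      (Complex.log (-(a * ev x w)) - Complex.log (-(b * ev x w))) := by
    intro x hx
    have hGix : IntegrableOn (fun t => ev x (G t)) (Set.Ioi 0) :=
      (ev x).toContinuousLinearMap.integrable_comp hGi
    have hs : ∀ d : ℂ, ‖d‖ = 1 → d.re = ε/2 → -(d * ev x w) ∈ Complex.slitPlane := by
      intro d hd hdr
      refine slit_aux hκ1 (mul_ne_zero (by rintro rfl; simp at hd) hx) ?_
      rw [norm_mul, hd, one_mul]
      exact re_bound hε (hw x) hd hdr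
    have hcg : Set.EqOn (fun t => ev x (G t)) (fun t : ℝ => ev x w *
      (ev x w * (b-a) * ((1 - (t:ℂ) * (a * ev x w))⁻¹ * (1 - (t:ℂ) * (b * ev x w))⁻¹)))
      (Set.Ioi 0) := fun t ht => hGev x t (le_of_lt ht)
    have hi2 := (integrableOn_congr_fun hcg measurableSet_Ioi).1 hGix
    have hi3 : IntegrableOn (fun t : ℝ =>
      (ev x w * (b-a) * ((1 - (t:ℂ) * (a * ev x w))⁻¹ * (1 - (t:ℂ) * (b * ev x w))⁻¹)))
      (Set.Ioi 0) := by
      have := Integrable.const_mul hi2 (ev x w)⁻¹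
      simp only [inv_mul_cancel_left₀ hx] at this
      exact this
    rw [hEev, setIntegral_congr_fun measurableSet_Ioi hcg, integral_const_mul,
      int_eval a b (ev x w) (hs a han har) (hs b hbn hbr) hi3]
  have hpi : (2 * (Real.pi:ℂ) * Complex.I) ≠ 0 := Complex.two_pi_I_ne_zero
  refine ⟨(2 * (Real.pi:ℂ) * Complex.I)⁻¹ • (E + (2 * γ * Complex.I) • w), fun x => ⟨fun h => ?_, fun h => ?_⟩⟩
  · have hx : ev x w ≠ 0 := by rintro h0; simp [h0] at h
    have h' : ε * ‖ev x w‖ ≤ (ev x w).re := (hw x).resolve_right (not_le.2 h)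
    rw [map_smul, map_add, map_smul, hEval x hx, ha, hb,
      log_val_pos hx hγ0 hγ2 (by rw [hcos]; linarith) h', smul_eq_mul, smul_eq_mul]
    field_simp
    ring
  · by_cases hx : ev x w = 0
    · rw [map_smul, map_add, map_smul, hEev]
      have : ∀ t ∈ Set.Ioi (0:ℝ), ev x (G t) = 0 := by
        intro t ht; rw [hGev x t (le_of_lt ht), hx]; simp
      rw [setIntegral_congr_fun measurableSet_Ioi this, hx]; simp
    · rw [map_smul, map_add, map_smul, hEval x hx, ha, hb, log_val_neg hx hγ0 hγ2 h,
        smul_eq_mul, smul_eq_mul]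
      ring

lemma le_of_pow_bound {c C y M : ℝ} (hc : 0 < c) (hM : 0 ≤ M)
    (h : ∀ m : ℕ, c * y ^ m ≤ C * M ^ m) : y ≤ M := by
  by_contra hcon
  push Not at hcon
  have hy : 0 < y := lt_of_le_of_lt hM hcon
  have h1 : Tendsto (fun m : ℕ => C * (M/y)^m) atTop (𝓝 (C * 0)) :=
    (tendsto_pow_atTop_nhds_zero_of_lt_one (by positivity) ((div_lt_one hy).2 hcon)).const_mul C
  have h2 : c ≤ C * 0 := by
    refine ge_of_tendsto' h1 (fun m => ?_)
    rw [div_pow, ← mul_div_assoc, le_div_iff₀ (by positivity)]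
    exact h m
  linarith

lemma kallin_abs {A X : Type*} [NormedCommRing A] [NormedAlgebra ℂ A] [CompleteSpace A]
    [TopologicalSpace X] [CompactSpace X]
    (ev : X → (A →ₐ[ℂ] ℂ)) (χ : A →ₐ[ℂ] ℂ)
    (hev : ∀ x a, ‖ev x a‖ ≤ ‖a‖) (hχ : ∀ a, ‖χ a‖ ≤ ‖a‖)
    (hcont : ∀ a, Continuous (fun x => ev x a))
    (hnorm : ∀ (a : A) (M : ℝ), 0 ≤ M → (∀ x, ‖ev x a‖ ≤ M) → ‖a‖ ≤ M)
    (p : A) (ε : ℝ) (hε : 0 < ε) (hε1 : ε ≤ 1)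
    (hp : ∀ x, (ev x p).im = 0 ∨ ε * ‖ev x p‖ ≤ |(ev x p).im|) :
    (∀ (P : A) (M : ℝ), 0 ≤ M → (∀ x, (ev x p).im = 0 → ‖ev x P‖ ≤ M) → ‖χ P‖ ≤ M) ∨
    (∀ (P : A) (M : ℝ), 0 ≤ M → (∀ x, (ev x p).im ≠ 0 → ‖ev x P‖ ≤ M) → ‖χ P‖ ≤ M) := by
  have hw1 : ∀ x, (ev x ((-Complex.I) • p)).re = (ev x p).im := by
    intro x; simp
  have hw2 : ∀ x, (ev x (Complex.I • p)).re = - (ev x p).im := by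
    intro x; simp
  obtain ⟨e1, he1⟩ := step_elem ev hev hnorm ((-Complex.I) • p) ε hε hε1 (by
    intro x
    rw [hw1, map_smul, norm_smul, norm_neg, Complex.norm_I, one_mul]
    rcases hp x with h | h
    · right; exact h.le
    · rcases le_total 0 (ev x p).im with h' | h'
      · left; rwa [abs_of_nonneg h'] at h
      · right; exact h')
  obtain ⟨e2, he2⟩ := step_elem ev hev hnorm (Complex.I • p) ε hε hε1 (by
    intro x
    rw [hw2, map_smul, norm_smul, Complex.norm_I, one_mul]
    rcases hp x with h | h
    · right; rw [h]; simp
    · rcases le_total 0 (ev x p).im with h' | h'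
      · right; linarith
      · left; rwa [abs_of_nonpos h'] at h)
  have key : ∀ e : A, χ e ≠ 0 → (∀ x, (ev x p).im = 0 → ev x e = 0) →
      (∀ (P : A) (M : ℝ), 0 ≤ M → (∀ x, (ev x p).im ≠ 0 → ‖ev x P‖ ≤ M) → ‖χ P‖ ≤ M) := by
    intro e he hz P M hM hPM
    refine le_of_pow_bound (c := ‖χ e‖) (C := ‖e‖) (norm_pos_iff.2 he) hM (fun m => ?_)
    rw [← norm_pow, ← norm_mul, ← map_pow, ← map_mul]
    refine (hχ _).trans (hnorm _ _ (by positivity) (fun x => ?_))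
    rw [map_mul, map_pow, norm_mul, norm_pow]
    by_cases hx : (ev x p).im = 0
    · rw [hz x hx]; simp; positivity
    · have := hPM x hx
      have := hev x e
      gcongr
  have hz1 : ∀ x, (ev x p).im = 0 → ev x e1 = 0 := fun x hx => (he1 x).2 (by rw [hw1, hx])
  have hz2 : ∀ x, (ev x p).im = 0 → ev x e2 = 0 := fun x hx => (he2 x).2 (by rw [hw2, hx]; simp)
  by_cases h1 : χ e1 = 0
  swap
  · exact Or.inr (key e1 h1 hz1)
  by_cases h2 : χ e2 = 0
  swap
  · exact Or.inr (key e2 h2 hz2)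
  left
  let _ : NormedAlgebra ℚ A := NormedAlgebra.restrictScalars ℚ ℂ A
  set F : A := NormedSpace.exp (-(e1 + e2)) with hF
  have hmap : ∀ ψ : A →ₐ[ℂ] ℂ, ψ F = Complex.exp (-(ψ e1 + ψ e2)) := by
    intro ψ
    rw [hF, NormedSpace.map_exp ψ (ψ.toContinuousLinearMap.continuous), map_neg, map_add,
      Complex.exp_eq_exp_ℂ]
  have hχF : χ F = 1 := by rw [hmap, h1, h2]; simp
  have hre : ∀ x, (ev x e1 + ev x e2).re = |(ev x p).im| := by
    intro x
    rcases lt_trichotomy (ev x p).im 0 with h | h | h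
    · rw [(he1 x).2 (by rw [hw1]; exact h.le), (he2 x).1 (by rw [hw2]; linarith), zero_add, hw2,
        abs_of_neg h]
    · rw [hz1 x h, hz2 x h, h]; simp
    · rw [(he1 x).1 (by rw [hw1]; exact h), (he2 x).2 (by rw [hw2]; linarith), add_zero, hw1,
        abs_of_pos h]
  have hFn : ∀ x, ‖ev x F‖ = Real.exp (-|(ev x p).im|) := by
    intro x; rw [hmap, Complex.norm_exp, Complex.neg_re, hre]
  intro P M hM hPM
  by_contra hcon
  push Not at hcon
  set M' := (M + ‖χ P‖) / 2 with hM'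
  have hMM : M < M' := by rw [hM']; linarith
  have hMχ : M' < ‖χ P‖ := by rw [hM']; linarith
  have hM'0 : 0 < M' := lt_of_le_of_lt hM hMM
  set Y : Set X := {x | M' ≤ ‖ev x P‖} with hY
  have hYc : IsCompact Y := (isClosed_le continuous_const (hcont P).norm).isCompact
  have hlt : ∃ ρ : ℝ, 0 ≤ ρ ∧ ρ < 1 ∧ ∀ x ∈ Y, ‖ev x F‖ ≤ ρ := by
    rcases Y.eq_empty_or_nonempty with h | h
    · exact ⟨0, le_rfl, one_pos, by simp [h]⟩
    · obtain ⟨x, hx, hmax⟩ := hYc.exists_isMaxOn h (hcont F).norm.continuousOn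
      refine ⟨‖ev x F‖, norm_nonneg _, ?_, fun y hy => hmax hy⟩
      rw [hFn, Real.exp_lt_one_iff]
      have : (ev x p).im ≠ 0 := by
        intro h0
        have := hPM x h0
        have : M' ≤ ‖ev x P‖ := hx
        linarith
      have := abs_pos.2 this
      linarith
  obtain ⟨ρ, hρ0, hρ1, hρ⟩ := hlt
  have ht : Tendsto (fun n : ℕ => ρ^n * ‖P‖) atTop (𝓝 (0 * ‖P‖)) :=
    (tendsto_pow_atTop_nhds_zero_of_lt_one hρ0 hρ1).mul_const _
  rw [zero_mul] at ht
  obtain ⟨n, hn⟩ := (ht.eventually (gt_mem_nhds hM'0)).exists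
  have h3 : ‖F^n * P‖ ≤ M' := by
    refine hnorm _ _ hM'0.le (fun x => ?_)
    rw [map_mul, map_pow, norm_mul, norm_pow]
    by_cases hx : x ∈ Y
    · have a1 := hρ x hx
      have a2 := hev x P
      refine le_trans ?_ hn.le
      gcongr
    · have a1 : ‖ev x P‖ ≤ M' := by
        have : ¬ (M' ≤ ‖ev x P‖) := hx
        linarith
      have a2 : ‖ev x F‖^n ≤ 1 := by
        apply pow_le_one₀ (norm_nonneg _)
        rw [hFn, Real.exp_le_one_iff]
        have := abs_nonneg (ev x p).im
        linarith
      calc _ ≤ 1 * M' := by gcongr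
        _ = M' := one_mul _
  have h4 := hχ (F^n*P)
  rw [map_mul, map_pow, hχF, one_pow, one_mul] at h4
  linarith

/-- The point of `ℂ²` as a function on `Fin 2`. -/
def ptv (z : ℂ × ℂ) : Fin 2 → ℂ := fun i => if i = 0 then z.1 else z.2

lemma ptv_cont (p : MvPolynomial (Fin 2) ℂ) :
    Continuous (fun z : ℂ × ℂ => MvPolynomial.eval (ptv z) p) := by
  have h : Continuous (fun z : ℂ × ℂ => ptv z) := by
    refine continuous_pi (fun i => ?_)
    unfold ptv
    by_cases hi : i = 0
    · simp only [hi, if_true]; exact continuous_fst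
    · simp only [hi, if_false]; exact continuous_snd
  exact (MvPolynomial.continuous_eval p).comp h

lemma mem_hull_of {K : Set (ℂ × ℂ)} (hK : ∃ L, IsCompact L ∧ K ⊆ L) {z : ℂ × ℂ}
    (h : ∀ (p : MvPolynomial (Fin 2) ℂ) (M : ℝ), 0 ≤ M →
      (∀ w ∈ K, ‖MvPolynomial.eval (ptv w) p‖ ≤ M) → ‖MvPolynomial.eval (ptv z) p‖ ≤ M) :
    z ∈ polyHull2 K := by
  intro p
  refine h p _ ?_ ?_
  · apply Real.sSup_nonneg
    rintro _ ⟨w, -, rfl⟩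
    exact norm_nonneg _
  · intro w hw
    obtain ⟨L, hL, hKL⟩ := hK
    refine le_csSup ?_ ⟨w, hw, rfl⟩
    exact ((hL.image (ptv_cont p).norm).bddAbove).mono (Set.image_mono hKL)

lemma hull_bound {K : Set (ℂ × ℂ)} {z : ℂ × ℂ} (hz : z ∈ polyHull2 K)
    (p : MvPolynomial (Fin 2) ℂ) (M : ℝ) (hM : 0 ≤ M)
    (h : ∀ w ∈ K, ‖MvPolynomial.eval (ptv w) p‖ ≤ M) : ‖MvPolynomial.eval (ptv z) p‖ ≤ M := by
  refine (hz p).trans (Real.sSup_le ?_ hM)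
  rintro _ ⟨w, hw, rfl⟩
  exact h w hw

lemma hull_mono {K L : Set (ℂ × ℂ)} (hL : ∃ L', IsCompact L' ∧ L ⊆ L') (h : K ⊆ L) :
    polyHull2 K ⊆ polyHull2 L := fun _ hz =>
  mem_hull_of hL (fun p M hM hp => hull_bound hz p M hM (fun w hw => hp w (h hw)))

lemma subset_hull {K : Set (ℂ × ℂ)} (hL : ∃ L', IsCompact L' ∧ K ⊆ L') :
    K ⊆ polyHull2 K := fun z hz => mem_hull_of hL (fun _ _ _ hp => hp z hz)

lemma kallin (K : Set (ℂ × ℂ)) (hK : IsCompact K) (p : MvPolynomial (Fin 2) ℂ) (ε : ℝ)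
    (hε : 0 < ε) (hε1 : ε ≤ 1)
    (hp : ∀ z ∈ K, (MvPolynomial.eval (ptv z) p).im = 0 ∨
      ε * ‖MvPolynomial.eval (ptv z) p‖ ≤ |(MvPolynomial.eval (ptv z) p).im|)
    (z₀ : ℂ × ℂ) (hz : z₀ ∈ polyHull2 K) :
    z₀ ∈ polyHull2 {z ∈ K | (MvPolynomial.eval (ptv z) p).im = 0} ∨
    z₀ ∈ polyHull2 {z ∈ K | (MvPolynomial.eval (ptv z) p).im ≠ 0} := by
  have hcs : CompactSpace K := isCompact_iff_compactSpace.1 hK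
  let φ : MvPolynomial (Fin 2) ℂ →ₐ[ℂ] (C(K, ℂ) × ℂ) := MvPolynomial.aeval (fun i =>
    ((⟨fun z => MvPolynomial.eval (ptv z.1) (MvPolynomial.X i),
      (ptv_cont _).comp continuous_subtype_val⟩ : C(K, ℂ)), ptv z₀ i))
  let evB : K → ((C(K, ℂ) × ℂ) →ₐ[ℂ] ℂ) := fun x =>
    (ContinuousMap.evalAlgHom ℂ ℂ x).comp (AlgHom.fst ℂ C(K, ℂ) ℂ)
  let χB : ((C(K, ℂ) × ℂ) →ₐ[ℂ] ℂ) := AlgHom.snd ℂ C(K, ℂ) ℂ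
  have hφ1 : ∀ x P, evB x (φ P) = MvPolynomial.eval (ptv x.1) P := by
    intro x P
    have : (evB x).comp φ = MvPolynomial.aeval (ptv x.1) := by
      apply MvPolynomial.algHom_ext
      intro i
      simp [φ, evB, MvPolynomial.aeval_X]
    have h2 := DFunLike.congr_fun this P
    rw [MvPolynomial.aeval_eq_eval] at h2
    exact h2
  have hφ2 : ∀ P, χB (φ P) = MvPolynomial.eval (ptv z₀) P := by
    intro P
    have : χB.comp φ = MvPolynomial.aeval (ptv z₀) := by
      apply MvPolynomial.algHom_ext
      intro i
      simp [φ, χB, MvPolynomial.aeval_X]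
    have h2 := DFunLike.congr_fun this P
    rw [MvPolynomial.aeval_eq_eval] at h2
    exact h2
  let S : Subalgebra ℂ (C(K, ℂ) × ℂ) := φ.range.topologicalClosure
  have hScl : IsClosed (S : Set (C(K, ℂ) × ℂ)) := Subalgebra.isClosed_topologicalClosure _
  have hcomp : CompleteSpace S := hScl.completeSpace_coe
  have hS : ∀ s ∈ S, ‖s.2‖ ≤ ‖s.1‖ := by
    have hcl : IsClosed {s : C(K, ℂ) × ℂ | ‖s.2‖ ≤ ‖s.1‖} :=
      isClosed_le continuous_snd.norm continuous_fst.norm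
    have hsub : (φ.range : Set (C(K, ℂ) × ℂ)) ⊆ {s : C(K, ℂ) × ℂ | ‖s.2‖ ≤ ‖s.1‖} := by
      rintro _ ⟨P, rfl⟩
      have h1 := hull_bound hz P ‖(φ P).1‖ (norm_nonneg _) (fun w hw => by
        rw [← hφ1 ⟨w, hw⟩ P]
        exact (φ P).1.norm_coe_le_norm _)
      rw [← hφ2] at h1
      exact h1
    intro s hs
    exact closure_minimal hsub hcl hs
  have hmain := kallin_abs (A := S) (X := K) (fun x => (evB x).comp S.val) (χB.comp S.val)
    (fun x a => (a.1.1.norm_coe_le_norm x).trans (norm_fst_le a.1))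
    (fun a => norm_snd_le a.1)
    (fun a => a.1.1.continuous)
    (fun a M hM h => by
      have h1 : ‖a.1.1‖ ≤ M := (ContinuousMap.norm_le _ hM).2 h
      have h2 : ‖a.1‖ ≤ M := by
        rw [Prod.norm_def]
        exact max_le h1 ((hS a.1 a.2).trans h1)
      exact h2)
    ⟨φ p, Subalgebra.le_topologicalClosure _ ⟨p, rfl⟩⟩ ε hε hε1
    (fun x => by
      have := hp x.1 x.2
      rw [← hφ1 x p] at this
      exact this)
  refine hmain.imp ?_ ?_
  · intro h
    refine mem_hull_of ⟨K, hK, Set.sep_subset _ _⟩ (fun P M hM hP => ?_)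
    have := h ⟨φ P, Subalgebra.le_topologicalClosure _ ⟨P, rfl⟩⟩ M hM (fun x hx => by
      change (evB x (φ p)).im = 0 at hx
      change ‖evB x (φ P)‖ ≤ M
      rw [hφ1] at hx ⊢
      exact hP x.1 ⟨x.2, hx⟩)
    change ‖χB (φ P)‖ ≤ M at this
    rwa [hφ2] at this
  · intro h
    refine mem_hull_of ⟨K, hK, Set.sep_subset _ _⟩ (fun P M hM hP => ?_)
    have := h ⟨φ P, Subalgebra.le_topologicalClosure _ ⟨P, rfl⟩⟩ M hM (fun x hx => by
      change (evB x (φ p)).im ≠ 0 at hx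
      change ‖evB x (φ P)‖ ≤ M
      rw [hφ1] at hx ⊢
      exact hP x.1 ⟨x.2, hx⟩)
    change ‖χB (φ P)‖ ≤ M at this
    rwa [hφ2] at this

lemma ball_compact (r : ℝ) : IsCompact (eClosedBall r) := by
  refine Metric.isCompact_of_isClosed_isBounded ?_ ?_
  · exact isClosed_le (by fun_prop) continuous_const
  · refine (Metric.isBounded_closedBall (x := (0 : ℂ × ℂ)) (r := |r|)).subset ?_
    intro z hz
    have hz' : ‖z.1‖ ^ 2 + ‖z.2‖ ^ 2 ≤ r ^ 2 := hz
    rw [mem_closedBall_zero_iff, Prod.norm_def]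
    refine max_le ?_ ?_
    · refine (le_abs_self _).trans (sq_le_sq.1 ?_); nlinarith [sq_nonneg ‖z.2‖]
    · refine (le_abs_self _).trans (sq_le_sq.1 ?_); nlinarith [sq_nonneg ‖z.1‖]

lemma scale_conv {E : Set (ℂ × ℂ)} (hE : ∀ (c : ℝ) (z : ℂ × ℂ), z ∈ E → (c : ℂ) • z ∈ E)
    (h : LocPolyConvexAt0 E) {s : ℝ} (hs : 0 < s) : PolyConvex2 (E ∩ eClosedBall s) := by
  obtain ⟨r, hr, hconv⟩ := h
  have hb : ∀ t, ∃ L', IsCompact L' ∧ (E ∩ eClosedBall t) ⊆ L' :=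
    fun t => ⟨_, ball_compact t, Set.inter_subset_right⟩
  have hsc : ∀ {t u : ℝ}, 0 < t → 0 < u → ∀ z ∈ E ∩ eClosedBall t,
      ((u / t : ℝ) : ℂ) • z ∈ E ∩ eClosedBall u := by
    rintro t u ht hu z ⟨hz1, hz2⟩
    refine ⟨hE _ _ hz1, ?_⟩
    have hz' : ‖z.1‖ ^ 2 + ‖z.2‖ ^ 2 ≤ t ^ 2 := hz2
    change ‖((u / t : ℝ) : ℂ) • z.1‖ ^ 2 + ‖((u / t : ℝ) : ℂ) • z.2‖ ^ 2 ≤ u ^ 2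
    rw [norm_smul, norm_smul, Complex.norm_of_nonneg (by positivity), mul_pow, mul_pow, ← mul_add]
    calc (u/t)^2 * (‖z.1‖ ^ 2 + ‖z.2‖ ^ 2) ≤ (u/t)^2 * t^2 := by gcongr
      _ = u^2 := by field_simp
  have hev : ∀ (c : ℂ) (P : MvPolynomial (Fin 2) ℂ) (z : ℂ × ℂ),
      MvPolynomial.eval (ptv z) (MvPolynomial.bind₁ (fun i => MvPolynomial.C c * MvPolynomial.X i) P)
        = MvPolynomial.eval (ptv (c • z)) P := by
    intro c P z
    have h1 := MvPolynomial.eval₂Hom_bind₁ (RingHom.id ℂ) (ptv z)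
      (fun i => MvPolynomial.C c * MvPolynomial.X i) P
    refine h1.trans ?_
    have h2 : (fun i => MvPolynomial.eval₂Hom (RingHom.id ℂ) (ptv z)
      (MvPolynomial.C c * MvPolynomial.X i)) = ptv (c • z) := by
      funext i
      by_cases hi : i = 0 <;> simp [ptv, hi]
    rw [h2]; rfl
  refine Set.Subset.antisymm ?_ (subset_hull (hb s))
  intro z hz
  have h1 : ((r / s : ℝ) : ℂ) • z ∈ polyHull2 (E ∩ eClosedBall r) := by
    refine mem_hull_of (hb r) (fun P M hM hP => ?_)
    rw [← hev]
    refine hull_bound hz _ M hM (fun w hw => ?_)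
    rw [hev]
    exact hP _ (hsc hs hr w hw)
  have h0 : polyHull2 (E ∩ eClosedBall r) = E ∩ eClosedBall r := hconv
  rw [h0] at h1
  have h2 := hsc hr hs _ h1
  rw [smul_smul] at h2
  have h3 : ((s / r : ℝ) : ℂ) * ((r / s : ℝ) : ℂ) = 1 := by
    rw [← Complex.ofReal_mul]; rw [div_mul_div_cancel₀ hr.ne', div_self hs.ne']; simp
  rwa [h3, one_smul] at h2

lemma plane0_smul (c : ℝ) (z : ℂ × ℂ) (h : z ∈ plane0) : (c : ℂ) • z ∈ plane0 := by
  obtain ⟨x, y, rfl⟩ := h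
  exact ⟨c * x, c * y, by simp⟩

lemma planeOf_smul (A : Matrix (Fin 2) (Fin 2) ℝ) (c : ℝ) (z : ℂ × ℂ) (h : z ∈ planeOf A) :
    (c : ℂ) • z ∈ planeOf A := by
  obtain ⟨x, y, rfl⟩ := h
  refine ⟨c * x, c * y, ?_⟩
  ext1 <;> simp <;> ring

lemma plane0_closed : IsClosed plane0 := by
  have : plane0 = {z : ℂ × ℂ | z.1.im = 0 ∧ z.2.im = 0} := by
    ext z
    constructor
    · rintro ⟨x, y, rfl⟩; simp
    · rintro ⟨h1, h2⟩
      refine ⟨z.1.re, z.2.re, Prod.ext (Complex.ext ?_ ?_) (Complex.ext ?_ ?_)⟩ <;> simp [h1, h2]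
  rw [this]
  exact (isClosed_eq (by fun_prop) continuous_const).inter (isClosed_eq (by fun_prop) continuous_const)

lemma planeOf_closed (A : Matrix (Fin 2) (Fin 2) ℝ) : IsClosed (planeOf A) := by
  have : planeOf A = {z : ℂ × ℂ | z.1.re = A 0 0 * z.1.im + A 0 1 * z.2.im ∧
      z.2.re = A 1 0 * z.1.im + A 1 1 * z.2.im} := by
    ext z
    constructor
    · rintro ⟨x, y, rfl⟩; simp
    · rintro ⟨h1, h2⟩
      refine ⟨z.1.im, z.2.im, Prod.ext (Complex.ext ?_ ?_) (Complex.ext ?_ ?_)⟩ <;> simp [h1, h2]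
  rw [this]
  exact (isClosed_eq (by fun_prop) (by fun_prop)).inter (isClosed_eq (by fun_prop) (by fun_prop))

lemma definite_form {α β δ : ℝ} (h : 0 < α * δ - β^2) :
    ∃ k > 0, ∀ x y : ℝ, k * (x^2 + y^2) ≤ |α * x^2 + 2 * β * x * y + δ * y^2| := by
  have hpos : ∀ α β δ : ℝ, 0 < α → 0 < α * δ - β^2 →
      ∃ k > 0, ∀ x y : ℝ, k * (x^2 + y^2) ≤ α * x^2 + 2 * β * x * y + δ * y^2 := by
    intro α β δ hα h
    have hδ : 0 < δ := by
      by_contra hcon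
      push Not at hcon
      nlinarith [sq_nonneg β]
    refine ⟨(α * δ - β^2) / (α + δ), by positivity, fun x y => ?_⟩
    rw [div_mul_eq_mul_div, div_le_iff₀ (by positivity)]
    nlinarith [sq_nonneg (α * x + β * y), sq_nonneg (β * x + δ * y)]
  rcases lt_trichotomy α 0 with hα | hα | hα
  · obtain ⟨k, hk, hk'⟩ := hpos (-α) (-β) (-δ) (by linarith) (by nlinarith)
    refine ⟨k, hk, fun x y => (hk' x y).trans ?_⟩
    refine le_trans (le_of_eq ?_) (neg_le_abs _)
    ring
  · subst hα; nlinarith [sq_nonneg β]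
  · obtain ⟨k, hk, hk'⟩ := hpos α β δ hα h
    exact ⟨k, hk, fun x y => (hk' x y).trans (le_abs_self _)⟩

/-- The quadratic polynomial used to separate the planes. -/
noncomputable def sepPoly (A : Matrix (Fin 2) (Fin 2) ℝ) : MvPolynomial (Fin 2) ℂ :=
  MvPolynomial.C ((A 1 0 : ℝ) : ℂ) * MvPolynomial.X 0 ^ 2
    - MvPolynomial.C ((A 0 0 - A 1 1 : ℝ) : ℂ) * (MvPolynomial.X 0 * MvPolynomial.X 1)
    - MvPolynomial.C ((A 0 1 : ℝ) : ℂ) * MvPolynomial.X 1 ^ 2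

lemma sepPoly_eval (A : Matrix (Fin 2) (Fin 2) ℝ) (z : ℂ × ℂ) :
    MvPolynomial.eval (ptv z) (sepPoly A) = ((A 1 0 : ℝ) : ℂ) * z.1 ^ 2
      - ((A 0 0 - A 1 1 : ℝ) : ℂ) * (z.1 * z.2) - ((A 0 1 : ℝ) : ℂ) * z.2 ^ 2 := by
  simp [sepPoly, ptv]

lemma core_hs (e f g h x y : ℝ) : ((e*x+f*y)^2 + x^2) + ((g*x+h*y)^2 + y^2) ≤
    (1 + 2*(e^2+f^2+g^2+h^2)) * (x^2+y^2) := by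
  have h1 : (e*x+f*y)^2 = (e^2+f^2)*(x^2+y^2) - (e*y-f*x)^2 := by ring
  have h2 : (g*x+h*y)^2 = (g^2+h^2)*(x^2+y^2) - (g*y-h*x)^2 := by ring
  have h3 : (1 + 2*(e^2+f^2+g^2+h^2)) * (x^2+y^2) = x^2 + y^2 + (e^2+f^2)*(x^2+y^2)
    + (g^2+h^2)*(x^2+y^2) + (e^2+f^2+g^2+h^2)*(x^2+y^2) := by ring
  have h4 : 0 ≤ (e^2+f^2+g^2+h^2)*(x^2+y^2) := by positivity
  rw [h1, h2, h3]
  linarith [sq_nonneg (e*y-f*x), sq_nonneg (g*y-h*x)]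

set_option maxHeartbeats 1000000 in
lemma core_P2 (A₁ A₂ : Matrix (Fin 2) (Fin 2) ℝ)
    (hb : A₂.det * A₁.trace ^ 2 < betaQ A₁ A₂) :
    ∃ ε > 0, ∀ z ∈ planeOf A₂,
      ((MvPolynomial.eval (ptv z) (sepPoly A₁)).im = 0 → z = 0) ∧
      ε * ‖MvPolynomial.eval (ptv z) (sepPoly A₁)‖ ≤
        |(MvPolynomial.eval (ptv z) (sepPoly A₁)).im| := by
  obtain ⟨a, b, c, d, rfl⟩ : ∃ a b c d : ℝ, A₁ = !![a, b; c, d] :=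
    ⟨_, _, _, _, Matrix.eta_fin_two A₁⟩
  obtain ⟨e, f, g, h, rfl⟩ : ∃ a b c d : ℝ, A₂ = !![a, b; c, d] :=
    ⟨_, _, _, _, Matrix.eta_fin_two A₂⟩
  have hdisc : 0 < (2*c*e - (a-d)*g) * (-(a-d)*f - 2*b*h) - (c*f - (a-d)*(e+h)/2 - b*g)^2 := by
    simp only [betaQ, Matrix.mul_fin_two, Matrix.det_fin_two_of, Matrix.trace_fin_two_of] at hb
    nlinarith
  obtain ⟨k, hk, hkf⟩ := definite_form hdisc
  set M : ℝ := (|c| + |a-d| + |b| + 1) * (1 + 2*(e^2+f^2+g^2+h^2)) with hM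
  have hMpos : 0 < M := by positivity
  refine ⟨k / M, by positivity, ?_⟩
  rintro _ ⟨x, y, rfl⟩
  rw [sepPoly_eval]
  simp only [Matrix.cons_val', Matrix.cons_val_zero, Matrix.cons_val_one, Matrix.cons_val_fin_one,
    Matrix.of_apply]
  set z1 : ℂ := ((e * x + f * y : ℝ) : ℂ) + Complex.I * (x : ℂ) with hz1
  set z2 : ℂ := ((g * x + h * y : ℝ) : ℂ) + Complex.I * (y : ℂ) with hz2
  have r1 : z1.re = e*x+f*y := by simp [hz1]
  have i1 : z1.im = x := by simp [hz1]
  have r2 : z2.re = g*x+h*y := by simp [hz2]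
  have i2 : z2.im = y := by simp [hz2]
  have him : ((c:ℂ) * z1^2 - ((a - d : ℝ):ℂ) * (z1*z2) - (b:ℂ) * z2^2).im =
      (2*c*e - (a-d)*g) * x^2 + 2 * (c*f - (a-d)*(e+h)/2 - b*g) * x * y + (-(a-d)*f - 2*b*h) * y^2 := by
    rw [Complex.sub_im, Complex.sub_im, Complex.im_ofReal_mul, Complex.im_ofReal_mul,
      Complex.im_ofReal_mul, sq, sq, Complex.mul_im, Complex.mul_im, Complex.mul_im, r1, i1, r2, i2]
    ring
  rw [him]
  have hlow := hkf x y
  refine ⟨fun h0 => ?_, ?_⟩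
  · rw [h0, abs_zero] at hlow
    have hx : x = 0 := by
      have : x^2 ≤ 0 := by nlinarith [sq_nonneg x, sq_nonneg y]
      exact pow_eq_zero_iff (two_ne_zero) |>.1 (le_antisymm this (sq_nonneg x))
    have hy : y = 0 := by
      have : y^2 ≤ 0 := by nlinarith [sq_nonneg x, sq_nonneg y]
      exact pow_eq_zero_iff (two_ne_zero) |>.1 (le_antisymm this (sq_nonneg y))
    rw [hz1, hz2, hx, hy]; simp
  · refine le_trans ?_ hlow
    have n1 : ‖z1‖^2 = (e*x+f*y)^2 + x^2 := by
      rw [Complex.sq_norm, Complex.normSq_apply, r1, i1]; ring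
    have n2 : ‖z2‖^2 = (g*x+h*y)^2 + y^2 := by
      rw [Complex.sq_norm, Complex.normSq_apply, r2, i2]; ring
    have hs : ‖z1‖^2 + ‖z2‖^2 ≤ (1 + 2*(e^2+f^2+g^2+h^2)) * (x^2+y^2) := by
      rw [n1, n2]
      exact core_hs e f g h x y
    have hup : ‖(c:ℂ) * z1^2 - ((a - d : ℝ):ℂ) * (z1*z2) - (b:ℂ) * z2^2‖ ≤ M * (x^2+y^2) := by
      have t1 : ‖(c:ℂ) * z1^2 - ((a - d : ℝ):ℂ) * (z1*z2) - (b:ℂ) * z2^2‖ ≤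
          |c| * ‖z1‖^2 + |a-d| * (‖z1‖ * ‖z2‖) + |b| * ‖z2‖^2 := by
        refine (norm_sub_le _ _).trans ?_
        refine (add_le_add_left (norm_sub_le _ _) _).trans (le_of_eq ?_)
        simp only [norm_mul, norm_pow, Complex.norm_real, Real.norm_eq_abs]
      refine t1.trans ?_
      have t2 : |c| * ‖z1‖^2 + |a-d| * (‖z1‖ * ‖z2‖) + |b| * ‖z2‖^2 ≤
          (|c| + |a-d| + |b| + 1) * (‖z1‖^2 + ‖z2‖^2) := by
        have u1 : |c| * ‖z1‖^2 ≤ |c| * (‖z1‖^2 + ‖z2‖^2) := by gcongr; nlinarith [sq_nonneg ‖z2‖]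
        have u2 : |a-d| * (‖z1‖ * ‖z2‖) ≤ |a-d| * (‖z1‖^2 + ‖z2‖^2) := by
          gcongr; nlinarith [sq_nonneg (‖z1‖ - ‖z2‖), sq_nonneg (‖z1‖ + ‖z2‖)]
        have u3 : |b| * ‖z2‖^2 ≤ |b| * (‖z1‖^2 + ‖z2‖^2) := by gcongr; nlinarith [sq_nonneg ‖z1‖]
        nlinarith [sq_nonneg ‖z1‖, sq_nonneg ‖z2‖]
      refine t2.trans ?_
      rw [hM, mul_assoc]
      gcongr
    rw [div_mul_eq_mul_div, div_le_iff₀ hMpos]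
    calc _ ≤ k * (M * (x^2+y^2)) := mul_le_mul_of_nonneg_left hup hk.le
      _ = _ := by ring

set_option maxHeartbeats 1000000 in
lemma core (A₁ A₂ : Matrix (Fin 2) (Fin 2) ℝ)
    (h01 : LocPolyConvexAt0 (plane0 ∪ planeOf A₁))
    (h12 : LocPolyConvexAt0 (planeOf A₁ ∪ planeOf A₂))
    (hb : A₂.det * A₁.trace ^ 2 < betaQ A₁ A₂) :
    LocPolyConvexAt0 (plane0 ∪ planeOf A₁ ∪ planeOf A₂) := by
  have c01 : PolyConvex2 ((plane0 ∪ planeOf A₁) ∩ eClosedBall 1) := by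
    refine scale_conv ?_ h01 one_pos
    rintro c z (hz | hz)
    · exact Or.inl (plane0_smul c z hz)
    · exact Or.inr (planeOf_smul _ c z hz)
  have c12 : PolyConvex2 ((planeOf A₁ ∪ planeOf A₂) ∩ eClosedBall 1) := by
    refine scale_conv ?_ h12 one_pos
    rintro c z (hz | hz)
    · exact Or.inl (planeOf_smul _ c z hz)
    · exact Or.inr (planeOf_smul _ c z hz)
  have hK : IsCompact ((plane0 ∪ planeOf A₁ ∪ planeOf A₂) ∩ eClosedBall 1) :=
    (ball_compact 1).inter_left
      ((plane0_closed.union (planeOf_closed A₁)).union (planeOf_closed A₂))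
  -- plane 0
  have hP0 : ∀ z ∈ plane0, (MvPolynomial.eval (ptv z) (sepPoly A₁)).im = 0 := by
    rintro _ ⟨x, y, rfl⟩
    rw [sepPoly_eval]
    have : ((A₁ 1 0 : ℝ) : ℂ) * (x:ℂ) ^ 2 - ((A₁ 0 0 - A₁ 1 1 : ℝ) : ℂ) * ((x:ℂ) * y)
      - ((A₁ 0 1 : ℝ) : ℂ) * (y:ℂ) ^ 2
      = ((A₁ 1 0 * x^2 - (A₁ 0 0 - A₁ 1 1) * (x*y) - A₁ 0 1 * y^2 : ℝ) : ℂ) := by push_cast; ring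
    exact (congrArg Complex.im this).trans (Complex.ofReal_im _)
  -- plane 1
  have hP1 : ∃ ε > 0, ∀ z ∈ planeOf A₁, (MvPolynomial.eval (ptv z) (sepPoly A₁)).im = 0 ∨
      ε * ‖MvPolynomial.eval (ptv z) (sepPoly A₁)‖ ≤
        |(MvPolynomial.eval (ptv z) (sepPoly A₁)).im| := by
    have hval : ∀ x y : ℝ, MvPolynomial.eval (ptv
        (((A₁ 0 0 * x + A₁ 0 1 * y : ℝ) : ℂ) + Complex.I * (x : ℂ),
            ((A₁ 1 0 * x + A₁ 1 1 * y : ℝ) : ℂ) + Complex.I * (y : ℂ))) (sepPoly A₁)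
        = ((A₁ 1 0 * x^2 - (A₁ 0 0 - A₁ 1 1) * (x*y) - A₁ 0 1 * y^2 : ℝ) : ℂ) *
          (((A₁ 0 0 * A₁ 1 1 - A₁ 0 1 * A₁ 1 0 - 1 : ℝ) : ℂ) + ((A₁ 0 0 + A₁ 1 1 : ℝ) : ℂ) * Complex.I) := by
      intro x y
      rw [sepPoly_eval]
      push_cast
      linear_combination (((A₁ 1 0:ℝ):ℂ) * x^2 - (((A₁ 0 0:ℝ):ℂ) - (A₁ 1 1:ℝ)) * (x*y) - (A₁ 0 1:ℝ) * y^2) * Complex.I_sq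
    set D : ℂ := ((A₁ 0 0 * A₁ 1 1 - A₁ 0 1 * A₁ 1 0 - 1 : ℝ) : ℂ) + ((A₁ 0 0 + A₁ 1 1 : ℝ) : ℂ) * Complex.I with hD
    have hDim : D.im = A₁ 0 0 + A₁ 1 1 := by
      rw [hD, Complex.add_im, Complex.ofReal_im, Complex.im_ofReal_mul, Complex.I_im]; ring
    by_cases ht : D.im = 0
    · refine ⟨1, one_pos, ?_⟩
      rintro _ ⟨x, y, rfl⟩
      left
      rw [hval, Complex.im_ofReal_mul, ht, mul_zero]
    · have hDn : 0 < ‖D‖ := by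
        rw [norm_pos_iff]; rintro h0; rw [h0] at ht; simp at ht
      refine ⟨|D.im| / ‖D‖, div_pos (abs_pos.2 ht) hDn, ?_⟩
      rintro _ ⟨x, y, rfl⟩
      right
      rw [hval, Complex.im_ofReal_mul, norm_mul, abs_mul, Complex.norm_real, Real.norm_eq_abs]
      apply le_of_eq
      field_simp
  have hP2 := core_P2 A₁ A₂ hb
  obtain ⟨ε1, hε1, hP1⟩ := hP1
  obtain ⟨ε2, hε2, hP2⟩ := hP2
  refine ⟨1, one_pos, Set.Subset.antisymm ?_ (subset_hull ⟨_, hK, le_rfl⟩)⟩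
  intro z hz
  have hle : ∀ (ε' : ℝ) (v : ℂ), min (min ε1 ε2) 1 ≤ ε' → ε' * ‖v‖ ≤ |v.im| →
      min (min ε1 ε2) 1 * ‖v‖ ≤ |v.im| := fun ε' v h1 h2 =>
    (mul_le_mul_of_nonneg_right h1 (norm_nonneg v)).trans h2
  have hkal := kallin _ hK (sepPoly A₁) (min (min ε1 ε2) 1) (by positivity) (min_le_right _ _)
    (by
      rintro w ⟨(hw | hw) | hw, -⟩
      · exact Or.inl (hP0 w hw)
      · exact (hP1 w hw).imp_right (hle ε1 _ ((min_le_left _ _).trans (min_le_left _ _)))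
      · exact Or.inr (hle ε2 _ ((min_le_left _ _).trans (min_le_right _ _)) (hP2 w hw).2)) z hz
  rcases hkal with h | h
  · have h' := hull_mono ⟨_, ball_compact 1, Set.inter_subset_right⟩
      (L := (plane0 ∪ planeOf A₁) ∩ eClosedBall 1) (by
      rintro w ⟨⟨hw | hw, hwb⟩, hi⟩
      · exact ⟨hw, hwb⟩
      · refine ⟨Or.inl ?_, hwb⟩
        rw [(hP2 w hw).1 hi]
        exact ⟨0, 0, by ext1 <;> simp⟩) h
    have e : polyHull2 ((plane0 ∪ planeOf A₁) ∩ eClosedBall 1) = _ := c01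
    rw [e] at h'
    exact ⟨Or.inl h'.1, h'.2⟩
  · have h' := hull_mono ⟨_, ball_compact 1, Set.inter_subset_right⟩
      (L := (planeOf A₁ ∪ planeOf A₂) ∩ eClosedBall 1) (by
      rintro w ⟨⟨(hw | hw) | hw, hwb⟩, hi⟩
      · exact absurd (hP0 w hw) hi
      · exact ⟨Or.inl hw, hwb⟩
      · exact ⟨Or.inr hw, hwb⟩) h
    have e : polyHull2 ((planeOf A₁ ∪ planeOf A₂) ∩ eClosedBall 1) = _ := c12
    rw [e] at h'
    refine ⟨?_, h'.2⟩
    rcases h'.1 with h'' | h''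
    · exact Or.inl (Or.inr h'')
    · exact Or.inr h''

end Aux

theorem stmt_16 (A₁ A₂ : Matrix (Fin 2) (Fin 2) ℝ)
    (htr0 : TotallyRealSet plane0)
    (htr1 : TotallyRealSet (planeOf A₁)) (htr2 : TotallyRealSet (planeOf A₂))
    (hpair01 : LocPolyConvexAt0 (plane0 ∪ planeOf A₁))
    (hpair02 : LocPolyConvexAt0 (plane0 ∪ planeOf A₂))
    (hpair12 : LocPolyConvexAt0 (planeOf A₁ ∪ planeOf A₂))
    (hcomm : 0 < (A₁ * A₂ - A₂ * A₁).det)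
    (hdet1 : A₁.det < 0) (hdet2 : A₂.det < 0)
    (hbeta : min (A₂.det * A₁.trace ^ 2) (A₁.det * A₂.trace ^ 2) < betaQ A₁ A₂) :
    LocPolyConvexAt0 (plane0 ∪ planeOf A₁ ∪ planeOf A₂) := by
  rcases min_lt_iff.1 hbeta with h | h
  · exact core A₁ A₂ hpair01 hpair12 h
  · have hsymm : betaQ A₁ A₂ = betaQ A₂ A₁ := by
      unfold betaQ
      rw [Matrix.trace_mul_comm A₁ A₂, Matrix.det_mul_comm A₁ A₂]
      ring
    have := core A₂ A₁ hpair02 (by rwa [Set.union_comm]) (by rw [← hsymm]; exact h)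
    rwa [Set.union_assoc, Set.union_comm (planeOf A₁), ← Set.union_assoc]
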